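/- arXiv:2301.08977 — 2 statements merged into one kernel-verified Lean document; each statement's English description precedes it below -/
import Mathlib

section
/- The Rademacher symbol Ψ : SL₂(ℤ) → ℝ, defined by Ψ(γ) = Φ(γ) − 3·sgn(c(a+d)) for γ = ((a,b),(c,d)), is a class function: Ψ(δγδ⁻¹) = Ψ(γ) for all γ, δ ∈ SL₂(ℤ). -/
open Classical in
/-- The sawtooth function `((x))`: `0` if `x ∈ ℤ`, and `x - ⌊x⌋ - 1/2` otherwise. -/
noncomputable def sawtooth (x : ℝ) : ℝ :=
  if ∃ n : ℤ, x = n then 0 else x - ⌊x⌋ - 1 / 2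

/-- The Dedekind sum `s(a, c) = ∑_{k=1}^{|c|} ((a k / c)) ((k / c))`. -/
noncomputable def dedekindSum (a c : ℤ) : ℝ :=
  ∑ k ∈ Finset.Icc (1 : ℤ) |c|, sawtooth ((a * k : ℤ) / (c : ℝ)) * sawtooth ((k : ℤ) / (c : ℝ))

/-- The Dedekind symbol `Φ : SL₂(ℤ) → ℝ`: for `γ = ((a,b),(c,d))` it is `b/d` if `c = 0`,
and `(a+d)/c - 12 sgn(c) s(a,c)` if `c ≠ 0`. -/
noncomputable def dedekindSymbol (g : Matrix.SpecialLinearGroup (Fin 2) ℤ) : ℝ :=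
  if (g : Matrix (Fin 2) (Fin 2) ℤ) 1 0 = 0 then
    ((g : Matrix (Fin 2) (Fin 2) ℤ) 0 1 : ℝ) / ((g : Matrix (Fin 2) (Fin 2) ℤ) 1 1 : ℝ)
  else
    (((g : Matrix (Fin 2) (Fin 2) ℤ) 0 0 + (g : Matrix (Fin 2) (Fin 2) ℤ) 1 1 : ℤ) : ℝ) /
        ((g : Matrix (Fin 2) (Fin 2) ℤ) 1 0 : ℝ) -
      12 * (((g : Matrix (Fin 2) (Fin 2) ℤ) 1 0).sign : ℝ) *
        dedekindSum ((g : Matrix (Fin 2) (Fin 2) ℤ) 0 0) ((g : Matrix (Fin 2) (Fin 2) ℤ) 1 0)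

/-- The Rademacher symbol `Ψ(γ) = Φ(γ) - 3 sgn(c (a + d))`. -/
noncomputable def rademacherSymbol (g : Matrix.SpecialLinearGroup (Fin 2) ℤ) : ℝ :=
  dedekindSymbol g -
    3 * ((((g : Matrix (Fin 2) (Fin 2) ℤ) 1 0) *
          ((g : Matrix (Fin 2) (Fin 2) ℤ) 0 0 + (g : Matrix (Fin 2) (Fin 2) ℤ) 1 1)).sign : ℝ)

/-!
On the circle `ℝ / ℤ`, the sawtooth function `B₁` and the periodised Bernoulli function `B₂` satisfy
an analogue of the addition formula of the cotangent:
`B₁(x) B₁(y) = B₁(x + y) (B₁(x) + B₁(y)) - (B₂(x) + B₂(y) + B₂(x + y)) / 2 + [x = y = 0] / 4`.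
Summing it over `x ∈ (1/a)ℤ / ℤ` and `y ∈ (1/c)ℤ / ℤ`, the distribution relations
`∑ⱼ B₁(x + j/n) = B₁(nx)` and `∑ⱼ B₂(x + j/n) = B₂(nx) / n` evaluate every term, which gives the
reciprocity law for `s(a, c) + s(c, a)`.

As `SL₂(ℤ)` is generated by `S = ((0,-1),(1,0))` and `T = ((1,1),(0,1))`, it is enough to conjugate
by these. For `T`, invariance is the periodicity of `s(·, c)`. Conjugation by `S` replaces
`((a,b),(c,d))` by `((d,-c),(-b,a))`, so that `s(a, b) = s(d, b)` has to be compared with `s(a, c)`.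
Adding the reciprocity laws for `(a, b)` and `(a, c)` does this: since `bc ≡ -1` modulo `a`, the
terms `s(b, a)` and `s(c, a)` cancel.
-/

open Finset ZMod

section ResidueSums

variable {M : Type*} [AddCommMonoid M] {n : ℕ} [NeZero n]

theorem sum_range_natCast_zmod (f : ZMod n → M) :
    ∑ k ∈ range n, f k = ∑ j, f j :=
  sum_nbij' (fun k ↦ (k : ZMod n)) val (fun _ _ ↦ mem_univ _)
    (fun j _ ↦ mem_range.2 j.val_lt) (fun _ hk ↦ val_cast_of_lt (mem_range.1 hk))
    (fun j _ ↦ natCast_zmod_val j) (fun _ _ ↦ rfl)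

theorem sum_Icc_intCast_zmod (f : ZMod n → M) :
    ∑ k ∈ Icc (1 : ℤ) n, f k = ∑ j, f j :=
  calc ∑ k ∈ Icc (1 : ℤ) n, f k
      = ∑ k ∈ range n, f (k + 1) :=
        sum_nbij' (fun k ↦ (k - 1).toNat) (fun k ↦ (k + 1 : ℤ))
          (by grind) (by grind) (by grind) (by grind) fun k hk ↦ by
            obtain ⟨m, rfl⟩ := Int.le.dest (mem_Icc.1 hk).1
            simp [add_comm]
    _ = ∑ j, f (j + 1) := sum_range_natCast_zmod fun j ↦ f (j + 1)
    _ = ∑ j, f j := Equiv.sum_comp (Equiv.addRight 1) f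

theorem sum_add_toAddCircle_of_forall_mem_Ico {f F : UnitAddCircle → M}
    (h : ∀ t ∈ Set.Ico (0 : ℝ) (1 / n), ∑ k ∈ range n, f ↑(t + k / n) = F ↑(n * t))
    (x : UnitAddCircle) : ∑ j : ZMod n, f (x + toAddCircle j) = F (n • x) := by
  obtain ⟨r, rfl⟩ := QuotientAddGroup.mk_surjective x
  have hn : (0 : ℝ) < n := by exact_mod_cast NeZero.pos n
  set m := ⌊n * r⌋
  set t := Int.fract (n * r) / n
  have hr : r = t + m / n := by
    rw [← add_div, Int.fract_add_floor, mul_div_cancel_left₀ _ hn.ne']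
  have ht : t ∈ Set.Ico (0 : ℝ) (1 / n) :=
    ⟨by positivity, div_lt_div_of_pos_right (Int.fract_lt_one _) hn⟩
  calc ∑ j : ZMod n, f (r + toAddCircle j)
      = ∑ j : ZMod n, f (t + toAddCircle ((m : ZMod n) + j)) := by
        simp only [map_add, toAddCircle_intCast, hr, AddCircle.coe_add, add_assoc]
    _ = ∑ j : ZMod n, f (t + toAddCircle j) :=
        Equiv.sum_comp (Equiv.addLeft (m : ZMod n)) fun j ↦ f (t + toAddCircle j)
    _ = ∑ k ∈ range n, f ↑(t + k / n) := by
        simp only [← sum_range_natCast_zmod, toAddCircle_natCast, AddCircle.coe_add]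
    _ = F (n • (r : UnitAddCircle)) := by
        rw [h t ht, mul_div_cancel₀ _ hn.ne', AddCircle.coe_fract, ← nsmul_eq_mul,
          AddCircle.coe_nsmul]

end ResidueSums

theorem sawtooth_eq_fract (x : ℝ) :
    sawtooth x = if Int.fract x = 0 then 0 else Int.fract x - 1 / 2 := by
  have hinteger : (∃ n : ℤ, x = n) ↔ Int.fract x = 0 := by
    simp only [Int.fract_eq_zero_iff, Set.mem_range, eq_comm]
  simp only [sawtooth, hinteger, Int.self_sub_floor]

theorem sawtooth_zero : sawtooth 0 = 0 := by
  simp [sawtooth_eq_fract]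

theorem sawtooth_of_mem_Ioo {x : ℝ} (hx : x ∈ Set.Ioo 0 1) : sawtooth x = x - 1 / 2 := by
  rw [sawtooth_eq_fract, Int.fract_eq_self.2 ⟨hx.1.le, hx.2⟩, if_neg hx.1.ne']

theorem sawtooth_periodic : Function.Periodic sawtooth 1 := fun x ↦ by
  simp only [sawtooth_eq_fract, Int.fract_add_one]

theorem sawtooth_neg (x : ℝ) : sawtooth (-x) = -sawtooth x := by
  by_cases hx : Int.fract x = 0
  · simp [sawtooth_eq_fract, hx]
  · rw [sawtooth_eq_fract, sawtooth_eq_fract, if_neg (Int.fract_neg_eq_zero.not.2 hx), if_neg hx,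
      Int.fract_neg hx]
    ring

/-- The sawtooth function descended to the circle `ℝ / ℤ`, the common domain of the addition
formula and of the distribution relations. -/
noncomputable def circleSawtooth : UnitAddCircle → ℝ :=
  sawtooth_periodic.lift

@[simp]
theorem circleSawtooth_coe (x : ℝ) : circleSawtooth x = sawtooth x := rfl

theorem circleSawtooth_zero : circleSawtooth 0 = 0 :=
  (circleSawtooth_coe 0).trans sawtooth_zero

theorem circleSawtooth_of_mem_Ico {x : ℝ} (hx : x ∈ Set.Ico 0 1) :
    circleSawtooth x = x - 1 / 2 + if x = 0 then 1 / 2 else 0 := by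
  split_ifs with h0
  · simp [h0, circleSawtooth_zero]
  · rw [circleSawtooth_coe, sawtooth_of_mem_Ioo ⟨lt_of_le_of_ne hx.1 (Ne.symm h0), hx.2⟩, add_zero]

theorem periodizedBernoulli_two_of_mem_Icc {x : ℝ} (hx : x ∈ Set.Icc 0 1) :
    periodizedBernoulli 2 x = x ^ 2 - x + 1 / 6 := by
  have hlift {y : ℝ} (hy : y ∈ Set.Ico 0 1) : periodizedBernoulli 2 y = y ^ 2 - y + 1 / 6 := by
    rw [periodizedBernoulli, AddCircle.liftIco_zero_coe_apply hy, bernoulliFun_two, one_div]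
  rcases hx.2.lt_or_eq with h | rfl
  · exact hlift ⟨hx.1, h⟩
  · rw [AddCircle.coe_period, ← AddCircle.coe_zero, hlift ⟨le_rfl, one_pos⟩]
    norm_num

theorem periodizedBernoulli_two_zero : periodizedBernoulli 2 0 = 1 / 6 := by
  simpa using periodizedBernoulli_two_of_mem_Icc (Set.left_mem_Icc.2 zero_le_one)

theorem exists_mem_Ioo_coe_eq {x : UnitAddCircle} (hx : x ≠ 0) :
    ∃ t ∈ Set.Ioo (0 : ℝ) 1, (t : UnitAddCircle) = x := by
  obtain ⟨r, rfl⟩ := QuotientAddGroup.mk_surjective x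
  refine ⟨Int.fract r, ⟨(Int.fract_nonneg r).lt_of_ne' fun h ↦ hx ?_, Int.fract_lt_one r⟩,
    AddCircle.coe_fract r⟩
  exact (AddCircle.coe_fract r).symm.trans (by rw [h, AddCircle.coe_zero])

theorem circleSawtooth_sq (x : UnitAddCircle) :
    circleSawtooth x ^ 2 = periodizedBernoulli 2 x + 1 / 12 - if x = 0 then 1 / 4 else 0 := by
  split_ifs with hx
  · rw [hx, circleSawtooth_zero, periodizedBernoulli_two_zero]
    norm_num
  · obtain ⟨t, ht, rfl⟩ := exists_mem_Ioo_coe_eq hx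
    rw [circleSawtooth_coe, sawtooth_of_mem_Ioo ht,
      periodizedBernoulli_two_of_mem_Icc (Set.Ioo_subset_Icc_self ht)]
    ring

theorem circleSawtooth_mul_circleSawtooth (x y : UnitAddCircle) :
    circleSawtooth x * circleSawtooth y =
      circleSawtooth (x + y) * (circleSawtooth x + circleSawtooth y)
        - (periodizedBernoulli 2 x + periodizedBernoulli 2 y + periodizedBernoulli 2 (x + y)) / 2
        + if x = 0 ∧ y = 0 then 1 / 4 else 0 := by
  by_cases hx : x = 0
  · have := circleSawtooth_sq y
    simp only [hx, zero_add, true_and, circleSawtooth_zero, periodizedBernoulli_two_zero]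
    linear_combination -this
  by_cases hy : y = 0
  · have := circleSawtooth_sq x
    simp only [hx, if_false] at this
    simp only [hx, hy, add_zero, false_and, if_false, circleSawtooth_zero,
      periodizedBernoulli_two_zero]
    linear_combination -this
  rw [if_neg fun h ↦ hx h.1]
  obtain ⟨s, hs, rfl⟩ := exists_mem_Ioo_coe_eq hx
  obtain ⟨t, ht, rfl⟩ := exists_mem_Ioo_coe_eq hy
  rw [circleSawtooth_coe s, circleSawtooth_coe t, sawtooth_of_mem_Ioo hs, sawtooth_of_mem_Ioo ht,
    periodizedBernoulli_two_of_mem_Icc (Set.Ioo_subset_Icc_self hs),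
    periodizedBernoulli_two_of_mem_Icc (Set.Ioo_subset_Icc_self ht), ← AddCircle.coe_add]
  rcases lt_trichotomy (s + t) 1 with hlt | heq | hgt
  · have hst : s + t ∈ Set.Ioo (0 : ℝ) 1 := ⟨add_pos hs.1 ht.1, hlt⟩
    rw [circleSawtooth_coe, sawtooth_of_mem_Ioo hst,
      periodizedBernoulli_two_of_mem_Icc (Set.Ioo_subset_Icc_self hst)]
    ring
  · rw [heq, AddCircle.coe_period, circleSawtooth_zero, periodizedBernoulli_two_zero,
      eq_sub_of_add_eq' heq]
    ring
  · have hst : s + t - 1 ∈ Set.Ioo (0 : ℝ) 1 := ⟨by linarith, by linarith [hs.2, ht.2]⟩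
    have hcoe : ((s + t : ℝ) : UnitAddCircle) = (s + t - 1 : ℝ) := by
      rw [AddCircle.coe_sub, AddCircle.coe_period, sub_zero]
    rw [hcoe, circleSawtooth_coe, sawtooth_of_mem_Ioo hst,
      periodizedBernoulli_two_of_mem_Icc (Set.Ioo_subset_Icc_self hst)]
    ring

theorem add_natCast_div_mem_Ico {n k : ℕ} {t : ℝ} (ht : t ∈ Set.Ico (0 : ℝ) (1 / n))
    (hk : k < n) : t + k / n ∈ Set.Ico (0 : ℝ) 1 := by
  have hn : (0 : ℝ) < n := by exact_mod_cast k.zero_le.trans_lt hk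
  have hk' : (k + 1 : ℝ) ≤ n := by exact_mod_cast hk
  refine ⟨add_nonneg ht.1 (by positivity), ?_⟩
  calc t + k / n < 1 / n + k / n := by linarith [ht.2]
    _ = (k + 1) / n := by ring
    _ ≤ 1 := (div_le_one hn).2 hk'

section Distribution

variable {n : ℕ} [NeZero n]

theorem sum_circleSawtooth_add_toAddCircle (x : UnitAddCircle) :
    ∑ j : ZMod n, circleSawtooth (x + toAddCircle j) = circleSawtooth (n • x) := by
  refine sum_add_toAddCircle_of_forall_mem_Ico (fun t ht ↦ ?_) x
  have hn : (0 : ℝ) < n := by exact_mod_cast NeZero.pos n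
  have hnt : n * t ∈ Set.Ico (0 : ℝ) 1 :=
    ⟨mul_nonneg hn.le ht.1, by rw [mul_comm, ← lt_div_iff₀ hn]; exact ht.2⟩
  have hzero (k : ℕ) : t + k / n = 0 ↔ k = 0 ∧ t = 0 := by
    rw [add_eq_zero_iff_of_nonneg ht.1 (by positivity)]
    simp [hn.ne', and_comm]
  have hprogression (m : ℕ) :
      ∑ k ∈ range m, (t + k / n - 1 / 2 : ℝ) = m * (t - 1 / 2) + m * (m - 1) / (2 * n) := by
    induction m with
    | zero => simp
    | succ m ih => rw [sum_range_succ, ih]; push_cast; field_simp; ring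
  calc ∑ k ∈ range n, circleSawtooth ↑(t + k / n)
      = ∑ k ∈ range n, (t + k / n - 1 / 2 + if k = 0 ∧ t = 0 then 1 / 2 else 0) :=
        sum_congr rfl fun k hk ↦ by
          simp only [circleSawtooth_of_mem_Ico (add_natCast_div_mem_Ico ht (mem_range.1 hk)), hzero]
    _ = n * t - 1 / 2 + if t = 0 then 1 / 2 else 0 := by
        simp only [sum_add_distrib, hprogression, ite_and, sum_ite_eq', mem_range, NeZero.pos n,
          if_true]
        field_simp
        ring
    _ = circleSawtooth ↑(n * t) := by
        simp only [circleSawtooth_of_mem_Ico hnt, mul_eq_zero, hn.ne', false_or]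

theorem sum_periodizedBernoulli_two_add_toAddCircle (x : UnitAddCircle) :
    ∑ j : ZMod n, periodizedBernoulli 2 (x + toAddCircle j) =
      periodizedBernoulli 2 (n • x) / n := by
  refine sum_add_toAddCircle_of_forall_mem_Ico (F := fun y ↦ periodizedBernoulli 2 y / n)
    (fun t ht ↦ ?_) x
  have hn : (0 : ℝ) < n := by exact_mod_cast NeZero.pos n
  have hnt : n * t ∈ Set.Icc (0 : ℝ) 1 :=
    ⟨mul_nonneg hn.le ht.1, by rw [mul_comm, ← le_div_iff₀ hn]; exact ht.2.le⟩
  have hprogression (m : ℕ) :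
      ∑ k ∈ range m, ((t + k / n) ^ 2 - (t + k / n) + 1 / 6 : ℝ) =
        m * (t ^ 2 - t + 1 / 6) + m * (m - 1) * (2 * t - 1) / (2 * n)
          + m * (m - 1) * (2 * m - 1) / (6 * n ^ 2) := by
    induction m with
    | zero => simp
    | succ m ih => rw [sum_range_succ, ih]; push_cast; field_simp; ring
  calc ∑ k ∈ range n, periodizedBernoulli 2 ↑(t + k / n)
      = ∑ k ∈ range n, ((t + k / n) ^ 2 - (t + k / n) + 1 / 6) :=
        sum_congr rfl fun k hk ↦ periodizedBernoulli_two_of_mem_Icc <|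
          Set.Ico_subset_Icc_self (add_natCast_div_mem_Ico ht (mem_range.1 hk))
    _ = periodizedBernoulli 2 ↑(n * t) / n := by
        rw [hprogression, periodizedBernoulli_two_of_mem_Icc hnt]
        field_simp
        ring

theorem nsmul_toAddCircle (m : ℕ) (j : ZMod n) :
    m • toAddCircle j = toAddCircle ((m : ZMod n) * j) := by
  rw [← map_nsmul, nsmul_eq_mul]

theorem sum_circleSawtooth_toAddCircle : ∑ j : ZMod n, circleSawtooth (toAddCircle j) = 0 := by
  simpa [circleSawtooth_zero] using sum_circleSawtooth_add_toAddCircle (n := n) 0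

theorem sum_periodizedBernoulli_two_toAddCircle :
    ∑ j : ZMod n, periodizedBernoulli 2 (toAddCircle j) = 1 / (6 * n) := by
  simpa [periodizedBernoulli_two_zero, div_eq_mul_inv, mul_comm] using
    sum_periodizedBernoulli_two_add_toAddCircle (n := n) 0

end Distribution

theorem dedekindSum_natCast_right (a : ℤ) (n : ℕ) [NeZero n] :
    dedekindSum a n = ∑ k : ZMod n,
      circleSawtooth (toAddCircle ((a : ZMod n) * k)) * circleSawtooth (toAddCircle k) := by
  rw [← sum_Icc_intCast_zmod, dedekindSum, Nat.abs_cast]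
  refine sum_congr rfl fun k _ ↦ ?_
  rw [← Int.cast_mul, toAddCircle_intCast, toAddCircle_intCast]
  rfl

theorem dedekindSum_neg_left (a c : ℤ) : dedekindSum (-a) c = -dedekindSum a c := by
  simp only [dedekindSum, neg_mul, Int.cast_neg, neg_div, sawtooth_neg, sum_neg_distrib]

theorem dedekindSum_neg_right (a c : ℤ) : dedekindSum a (-c) = dedekindSum a c := by
  simp only [dedekindSum, abs_neg, Int.cast_neg, div_neg, sawtooth_neg, neg_mul_neg]

theorem dedekindSum_zero_right (a : ℤ) : dedekindSum a 0 = 0 := by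
  simp [dedekindSum]

theorem dedekindSum_one_right (a : ℤ) : dedekindSum a 1 = 0 := by
  rw [← Nat.cast_one, dedekindSum_natCast_right a 1]
  simp [Subsingleton.elim _ (0 : ZMod 1), circleSawtooth_zero]

theorem dedekindSum_natAbs_right (a c : ℤ) : dedekindSum a c.natAbs = dedekindSum a c := by
  rcases Int.natAbs_eq c with h | h
  · rw [← h]
  · rw [h, dedekindSum_neg_right, Int.natAbs_neg, Int.natAbs_natCast]

theorem dedekindSum_congr {a a' c : ℤ} (h : a ≡ a' [ZMOD c]) :
    dedekindSum a c = dedekindSum a' c := by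
  rcases eq_or_ne c 0 with rfl | hc
  · rw [dedekindSum_zero_right, dedekindSum_zero_right]
  have : NeZero c.natAbs := ⟨Int.natAbs_ne_zero.2 hc⟩
  have ha : (a : ZMod c.natAbs) = a' := by
    rwa [ZMod.intCast_eq_intCast_iff, Int.modEq_natAbs]
  rw [← dedekindSum_natAbs_right a, ← dedekindSum_natAbs_right a', dedekindSum_natCast_right,
    dedekindSum_natCast_right, ha]

theorem dedekindSum_eq_of_mul_modEq_one {a d c : ℤ} (h : a * d ≡ 1 [ZMOD c]) :
    dedekindSum a c = dedekindSum d c := by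
  rcases eq_or_ne c 0 with rfl | hc
  · rw [dedekindSum_zero_right, dedekindSum_zero_right]
  have : NeZero c.natAbs := ⟨Int.natAbs_ne_zero.2 hc⟩
  have had : (a : ZMod c.natAbs) * d = 1 := by
    rwa [← Int.cast_mul, ← Int.cast_one, ZMod.intCast_eq_intCast_iff, Int.modEq_natAbs]
  rw [← dedekindSum_natAbs_right a, ← dedekindSum_natAbs_right d, dedekindSum_natCast_right,
    dedekindSum_natCast_right]
  refine Fintype.sum_equiv (Units.mulLeft (Units.mkOfMulEqOne _ _ had)) _ _ fun k ↦ ?_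
  have hk : (d : ZMod c.natAbs) * (a * k) = k := by linear_combination k * had
  rw [Units.mulLeft_apply, Units.val_mkOfMulEqOne, hk, mul_comm]

theorem sum_sum_circleSawtooth_add_mul (a c : ℕ) [NeZero a] [NeZero c] :
    ∑ i : ZMod a, ∑ j : ZMod c,
      circleSawtooth (toAddCircle i + toAddCircle j) * circleSawtooth (toAddCircle i) =
      dedekindSum c a := by
  simp only [← sum_mul, sum_circleSawtooth_add_toAddCircle, dedekindSum_natCast_right,
    nsmul_toAddCircle, Int.cast_natCast]

theorem sum_sum_periodizedBernoulli_two_add {a c : ℕ} [NeZero a] [NeZero c] (h : a.Coprime c) :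
    ∑ i : ZMod a, ∑ j : ZMod c, periodizedBernoulli 2 (toAddCircle i + toAddCircle j) =
      1 / (6 * a * c) := by
  have hmul : ∑ i : ZMod a, periodizedBernoulli 2 (toAddCircle ((c : ZMod a) * i)) =
      ∑ i : ZMod a, periodizedBernoulli 2 (toAddCircle i) :=
    Equiv.sum_comp (Units.mulLeft (unitOfCoprime c h.symm)) fun i ↦
      periodizedBernoulli 2 (toAddCircle i)
  simp only [sum_periodizedBernoulli_two_add_toAddCircle, nsmul_toAddCircle, ← sum_div, hmul,
    sum_periodizedBernoulli_two_toAddCircle]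
  field_simp

theorem dedekindSum_reciprocity_natCast {a c : ℕ} [NeZero a] [NeZero c] (h : a.Coprime c) :
    12 * (dedekindSum a c + dedekindSum c a) = a / c + c / a + 1 / (a * c) - 3 := by
  have hleft : ∑ i : ZMod a, ∑ j : ZMod c,
      circleSawtooth (toAddCircle i) * circleSawtooth (toAddCircle j) = 0 := by
    simp only [← mul_sum, sum_circleSawtooth_toAddCircle, mul_zero, sum_const_zero]
  have hright : ∑ i : ZMod a, ∑ j : ZMod c,
      circleSawtooth (toAddCircle i + toAddCircle j) * circleSawtooth (toAddCircle j) =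
      dedekindSum a c := by
    rw [sum_comm]
    simpa only [add_comm] using sum_sum_circleSawtooth_add_mul c a
  have hcorrection : ∑ i : ZMod a, ∑ j : ZMod c,
      (if toAddCircle i = 0 ∧ toAddCircle j = 0 then 1 / 4 else 0 : ℝ) = 1 / 4 := by
    simp [ite_and]
  have hsummed : 0 = dedekindSum c a + dedekindSum a c
      - (c / (6 * a) + a / (6 * c) + 1 / (6 * a * c)) / 2 + (1 / 4 : ℝ) := by
    rw [← hleft]
    simp only [circleSawtooth_mul_circleSawtooth (toAddCircle _), mul_add, sum_add_distrib,
      sum_sub_distrib, ← sum_div, sum_sum_circleSawtooth_add_mul a c, hright, hcorrection,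
      sum_sum_periodizedBernoulli_two_add h, sum_const, card_univ, ZMod.card,
      sum_periodizedBernoulli_two_toAddCircle, nsmul_eq_mul, ← mul_sum]
    ring
  linear_combination -12 * hsummed

/-- The Dedekind sum normalised to be odd in `c`, as it enters the Dedekind symbol:
`sgn(c) s(a, c)`. -/
noncomputable def signedDedekindSum (a c : ℤ) : ℝ :=
  c.sign * dedekindSum a c

theorem signedDedekindSum_neg_left (a c : ℤ) :
    signedDedekindSum (-a) c = -signedDedekindSum a c := by
  simp only [signedDedekindSum, dedekindSum_neg_left, mul_neg]

theorem signedDedekindSum_neg_right (a c : ℤ) :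
    signedDedekindSum a (-c) = -signedDedekindSum a c := by
  simp only [signedDedekindSum, dedekindSum_neg_right, Int.sign_neg, Int.cast_neg, neg_mul]

theorem signedDedekindSum_of_isUnit_right (a : ℤ) {c : ℤ} (hc : IsUnit c) :
    signedDedekindSum a c = 0 := by
  rcases Int.isUnit_iff.1 hc with rfl | rfl <;>
    simp only [signedDedekindSum, dedekindSum_neg_right, dedekindSum_one_right, mul_zero]

theorem signedDedekindSum_eq_of_mul_modEq_one {a d c : ℤ} (h : a * d ≡ 1 [ZMOD c]) :
    signedDedekindSum a c = signedDedekindSum d c := by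
  rw [signedDedekindSum, dedekindSum_eq_of_mul_modEq_one h, signedDedekindSum]

theorem signedDedekindSum_reciprocity {a c : ℤ} (ha : a ≠ 0) (hc : c ≠ 0) (h : IsCoprime a c) :
    12 * (signedDedekindSum a c + signedDedekindSum c a) =
      a / c + c / a + 1 / (a * c) - 3 * (a.sign * c.sign) := by
  have : NeZero a.natAbs := ⟨Int.natAbs_ne_zero.2 ha⟩
  have : NeZero c.natAbs := ⟨Int.natAbs_ne_zero.2 hc⟩
  have hnat := dedekindSum_reciprocity_natCast (Int.isCoprime_iff_gcd_eq_one.1 h)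
  have hma := Int.sign_natCast_of_ne_zero (NeZero.ne a.natAbs)
  have hmc := Int.sign_natCast_of_ne_zero (NeZero.ne c.natAbs)
  rcases Int.natAbs_eq a with ha' | ha' <;> rcases Int.natAbs_eq c with hc' | hc' <;>
    rw [ha', hc'] <;>
    simp only [signedDedekindSum, dedekindSum_neg_left, dedekindSum_neg_right, Int.sign_neg,
      hma, hmc, Int.cast_neg, Int.cast_one, Int.cast_natCast]
  · linear_combination hnat
  · linear_combination -hnat
  · linear_combination -hnat
  · linear_combination hnat

theorem sign_add_sign_mul_sign_add {a b c d : ℤ} (h : a * d - b * c = 1) :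
    (b.sign + c.sign) * (a + d).sign = (b.sign + c.sign) * a.sign := by
  rcases lt_or_ge (b * c) 0 with hbc | hbc
  · have : b.sign + c.sign = 0 := by
      rcases mul_neg_iff.1 hbc with ⟨hb, hc⟩ | ⟨hb, hc⟩ <;>
        simp [Int.sign_eq_one_of_pos, Int.sign_eq_neg_one_of_neg, hb, hc]
    rw [this, zero_mul, zero_mul]
  · have had : 0 < a * d := by linarith
    rcases mul_pos_iff.1 had with ⟨ha, hd⟩ | ⟨ha, hd⟩
    · rw [Int.sign_eq_one_of_pos ha, Int.sign_eq_one_of_pos (add_pos ha hd)]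
    · rw [Int.sign_eq_neg_one_of_neg ha, Int.sign_eq_neg_one_of_neg (add_neg ha hd)]

theorem signedDedekindSum_add_signedDedekindSum {a b c d : ℤ} (h : a * d - b * c = 1)
    (hb : b ≠ 0) (hc : c ≠ 0) :
    12 * (signedDedekindSum a b + signedDedekindSum a c) =
      (a + d) / b + (a + d) / c - 3 * ((b.sign + c.sign) * (a + d).sign) := by
  rcases eq_or_ne a 0 with rfl | ha
  · have hbc : b = -c := by
      rcases Int.mul_eq_one_iff_eq_one_or_neg_one.1 (show b * -c = 1 by linarith) with h | h <;>
        exact h.1.trans h.2.symm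
    simp [hbc, signedDedekindSum_neg_right, div_neg]
  have hab := signedDedekindSum_reciprocity ha hb ⟨d, -c, by linear_combination h⟩
  have hac := signedDedekindSum_reciprocity ha hc ⟨d, -b, by linear_combination h⟩
  have hcancel : signedDedekindSum b a = -signedDedekindSum c a := by
    rw [← signedDedekindSum_neg_left]
    exact signedDedekindSum_eq_of_mul_modEq_one <|
      Int.modEq_iff_dvd.2 ⟨d, by linear_combination -h⟩
  have hsign : ((b.sign + c.sign) * (a + d).sign : ℝ) = (b.sign + c.sign) * a.sign := by
    exact_mod_cast sign_add_sign_mul_sign_add h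
  have hdet : (a * d - b * c : ℝ) = 1 := by exact_mod_cast h
  have hfrac : (a / b + b / a + 1 / (a * b) + (a / c + c / a + 1 / (a * c)) : ℝ) =
      (a + d) / b + (a + d) / c := by
    field_simp
    linear_combination -(b + c) * hdet
  linear_combination hab + hac - 12 * hcancel + hfrac + 3 * hsign

open ModularGroup
open scoped MatrixGroups

section Conjugation

variable {g : SL(2, ℤ)} {a b c d : ℤ}

theorem det_eq_one_of_coe_eq (hg : (g : Matrix (Fin 2) (Fin 2) ℤ) = !![a, b; c, d]) :
    a * d - b * c = 1 := by
  rw [← Matrix.det_fin_two_of, ← hg, g.det_coe]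

theorem rademacherSymbol_of_lower_left_eq_zero
    (hg : (g : Matrix (Fin 2) (Fin 2) ℤ) = !![a, b; 0, d]) : rademacherSymbol g = b / d := by
  simp [rademacherSymbol, dedekindSymbol, hg]

theorem rademacherSymbol_of_lower_left_ne_zero
    (hg : (g : Matrix (Fin 2) (Fin 2) ℤ) = !![a, b; c, d]) (hc : c ≠ 0) :
    rademacherSymbol g =
      (a + d) / c - 12 * signedDedekindSum a c - 3 * (c.sign * (a + d).sign) := by
  simp [rademacherSymbol, dedekindSymbol, hg, hc, signedDedekindSum, mul_assoc]

theorem coe_T_conj (hg : (g : Matrix (Fin 2) (Fin 2) ℤ) = !![a, b; c, d]) :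
    ((T * g * T⁻¹ : SL(2, ℤ)) : Matrix (Fin 2) (Fin 2) ℤ) =
      !![a + c, b + d - (a + c); c, d - c] := by
  simp [hg, coe_T, sub_eq_neg_add, add_comm a]

theorem coe_S_conj (hg : (g : Matrix (Fin 2) (Fin 2) ℤ) = !![a, b; c, d]) :
    ((S * g * S⁻¹ : SL(2, ℤ)) : Matrix (Fin 2) (Fin 2) ℤ) = !![d, -c; -b, a] := by
  simp [hg, coe_S]

theorem rademacherSymbol_T_conj (g : SL(2, ℤ)) :
    rademacherSymbol (T * g * T⁻¹) = rademacherSymbol g := by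
  obtain ⟨a, b, c, d, hg⟩ : ∃ a b c d, (g : Matrix (Fin 2) (Fin 2) ℤ) = !![a, b; c, d] :=
    ⟨_, _, _, _, Matrix.eta_fin_two _⟩
  have hTg := coe_T_conj hg
  rcases eq_or_ne c 0 with rfl | hc
  · have had : a = d := Int.eq_of_mul_eq_one (by simpa using det_eq_one_of_coe_eq hg)
    rw [add_zero, sub_zero, had, add_sub_cancel_right] at hTg
    rw [rademacherSymbol_of_lower_left_eq_zero hg, rademacherSymbol_of_lower_left_eq_zero hTg]
  · have hperiod : dedekindSum (a + c) c = dedekindSum a c := dedekindSum_congr Int.add_modEq_right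
    rw [rademacherSymbol_of_lower_left_ne_zero hg hc, rademacherSymbol_of_lower_left_ne_zero hTg hc,
      signedDedekindSum, hperiod, signedDedekindSum, add_add_sub_cancel]
    push_cast
    ring

theorem rademacherSymbol_S_conj_of_lower_left_eq_zero
    (hg : (g : Matrix (Fin 2) (Fin 2) ℤ) = !![a, b; 0, d]) :
    rademacherSymbol (S * g * S⁻¹) = rademacherSymbol g := by
  have hSg := coe_S_conj hg
  rw [rademacherSymbol_of_lower_left_eq_zero hg]
  rcases eq_or_ne b 0 with rfl | hb
  · rw [neg_zero] at hSg
    rw [rademacherSymbol_of_lower_left_eq_zero hSg, Int.cast_zero, zero_div, zero_div]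
  have hdet : a * d = 1 := by simpa using det_eq_one_of_coe_eq hg
  have hd : IsUnit d := .of_mul_eq_one_right a hdet
  have hdb : 1 / (d * b : ℝ) = a / b := by
    have hdetR : (a * d : ℝ) = 1 := by exact_mod_cast hdet
    rw [← div_div, ← eq_one_div_of_mul_eq_one_left hdetR]
  have hsign : (b.sign * (d + a).sign : ℝ) = b.sign * d.sign := by
    have h := sign_add_sign_mul_sign_add (a := d) (b := b) (c := 0) (d := a) (by linarith)
    rw [Int.sign_zero, add_zero] at h
    exact_mod_cast h
  have hreciprocity :=
    signedDedekindSum_reciprocity hd.ne_zero hb ⟨a, 0, by linear_combination hdet⟩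
  rw [signedDedekindSum_of_isUnit_right b hd, hdb] at hreciprocity
  rw [rademacherSymbol_of_lower_left_ne_zero hSg (neg_ne_zero.2 hb), signedDedekindSum_neg_right,
    Int.sign_neg, Int.cast_neg, Int.cast_neg, div_neg]
  linear_combination hreciprocity + 3 * hsign

theorem rademacherSymbol_S_conj (g : SL(2, ℤ)) :
    rademacherSymbol (S * g * S⁻¹) = rademacherSymbol g := by
  obtain ⟨a, b, c, d, hg⟩ : ∃ a b c d, (g : Matrix (Fin 2) (Fin 2) ℤ) = !![a, b; c, d] :=
    ⟨_, _, _, _, Matrix.eta_fin_two _⟩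
  have hSg := coe_S_conj hg
  rcases eq_or_ne c 0 with rfl | hc
  · exact rademacherSymbol_S_conj_of_lower_left_eq_zero hg
  rcases eq_or_ne b 0 with rfl | hb
  · have hSSg : S * (S * g * S⁻¹) * S⁻¹ = g :=
      Subtype.ext <| (coe_S_conj hSg).trans (by rw [hg, neg_neg, neg_neg])
    rw [neg_zero] at hSg
    rw [← rademacherSymbol_S_conj_of_lower_left_eq_zero hSg, hSSg]
  have hdet := det_eq_one_of_coe_eq hg
  have hinv : signedDedekindSum d b = signedDedekindSum a b :=
    signedDedekindSum_eq_of_mul_modEq_one <| Int.modEq_iff_dvd.2 ⟨-c, by linear_combination -hdet⟩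
  rw [rademacherSymbol_of_lower_left_ne_zero hg hc,
    rademacherSymbol_of_lower_left_ne_zero hSg (neg_ne_zero.2 hb), signedDedekindSum_neg_right,
    hinv, Int.sign_neg, add_comm d, add_comm (d : ℝ), Int.cast_neg, Int.cast_neg, div_neg]
  linear_combination signedDedekindSum_add_signedDedekindSum hdet hb hc

end Conjugation

/-- **The Rademacher symbol is a class function on `SL₂(ℤ)`:**
`Ψ(δ γ δ⁻¹) = Ψ(γ)` for all `γ, δ ∈ SL₂(ℤ)`. -/
theorem rademacherSymbol_conj_invariant
    (γ δ : Matrix.SpecialLinearGroup (Fin 2) ℤ) :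
    rademacherSymbol (δ * γ * δ⁻¹) = rademacherSymbol γ := by
  have hδ : δ ∈ Subgroup.closure {S, T} := by
    rw [SpecialLinearGroup.SL2Z_generators]
    exact Subgroup.mem_top δ
  induction hδ using Subgroup.closure_induction generalizing γ with
  | mem g hg =>
    rcases hg with rfl | rfl
    exacts [rademacherSymbol_S_conj γ, rademacherSymbol_T_conj γ]
  | one => rw [one_mul, inv_one, mul_one]
  | mul g h _ _ ihg ihh =>
    rw [← ihh γ, ← ihg (h * γ * h⁻¹)]
    simp only [mul_inv_rev, mul_assoc]
  | inv g _ ihg =>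
    rw [← ihg]
    simp only [mul_assoc, inv_inv, mul_inv_cancel_left, mul_inv_cancel, mul_one]
end

section
/- Let p be a prime and let h be a modular form of weight 2 for the congruence subgroup Γ₀(p), with q-expansion h = Σ_{n ≥ 0} a_n q^n at the cusp ∞. If a_n = 0 for every integer n ≥ 1 with p ∤ n, then h = 0. -/
open scoped MatrixGroups Real

/-!
The vanishing of `aₙ` off the multiples of `N` says that `h(z + 1/N) = h(z)`. Conjugation by
`diag(1, N)` carries the translation by `1/N` to `T` and the matrix `(1 0; N 1) ∈ Γ₀(N)` to
`(1 0; 1 1) = T * S * T`. Hence the slash of `h` by `diag(1, N)`, which is `h(z/N)` up to a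
constant, is invariant under `S` and `T`, so it is a modular form of level one. There is no nonzero
such form in weight `2`.
-/

section

open UpperHalfPlane ModularForm Matrix Matrix.GeneralLinearGroup
open scoped Manifold OnePoint

section Matrices

variable {R : Type*} [CommRing R]

/-- The lower unipotent matrix `(1 0; c 1)`, the transpose of `upperRightHom c`. -/
def lowerUnipotent (c : R) : GL (Fin 2) R :=
  ⟨!![1, 0; c, 1], !![1, 0; -c, 1], by simp [one_fin_two], by simp [one_fin_two]⟩

/-- The matrix `diag(1, r)`, acting on `ℍ` by `z ↦ z / r` when `0 < r`; slashing by it turns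
invariance under translation by `r⁻¹` into invariance under translation by `1`. -/
def diagOne (r : Rˣ) : GL (Fin 2) R :=
  ⟨!![1, 0; 0, r], !![1, 0; 0, (r⁻¹ : Rˣ)], by simp [one_fin_two], by simp [one_fin_two]⟩

lemma diagOne_mul_upperRightHom (r : Rˣ) (x : R) :
    diagOne r * upperRightHom (x * r) = upperRightHom x * diagOne r := by
  simp [Units.ext_iff, diagOne]

lemma diagOne_mul_lowerUnipotent (r : Rˣ) (c : R) :
    diagOne r * lowerUnipotent c = lowerUnipotent (r * c) * diagOne r := by
  simp [Units.ext_iff, diagOne, lowerUnipotent]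

lemma coe_T_eq_upperRightHom : (ModularGroup.T : GL (Fin 2) ℝ) = upperRightHom 1 := by
  ext i j
  fin_cases i <;> fin_cases j <;> simp [ModularGroup.coe_T]

lemma lowerUnipotent_one_eq_T_mul_S_mul_T :
    lowerUnipotent (1 : ℝ) = (ModularGroup.T * ModularGroup.S * ModularGroup.T : SL(2, ℤ)) := by
  ext i j
  fin_cases i <;> fin_cases j <;>
    simp [lowerUnipotent, Matrix.mul_apply, ModularGroup.coe_T, ModularGroup.coe_S]

lemma lowerUnipotent_mem_Gamma0 (N : ℕ) :
    lowerUnipotent (N : ℝ) ∈ (CongruenceSubgroup.Gamma0 N : Subgroup (GL (Fin 2) ℝ)) := by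
  have hmem : (ModularGroup.T ^ (N : ℤ)).transpose ∈ CongruenceSubgroup.Gamma0 N := by
    simp [CongruenceSubgroup.Gamma0_mem, ModularGroup.coe_T_zpow, -zpow_natCast]
  refine ⟨_, hmem, ?_⟩
  ext i j
  fin_cases i <;> fin_cases j <;>
    simp [lowerUnipotent, ModularGroup.coe_T_zpow, -zpow_natCast]

end Matrices

section Slash

variable {f : ℍ → ℂ} {k : ℤ}

lemma slash_upperRightHom_apply (f : ℍ → ℂ) (k : ℤ) (x : ℝ) (τ : ℍ) :
    (f ∣[k] upperRightHom x) τ = f (x +ᵥ τ) := by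
  have hx : upperRightHom x • τ = x +ᵥ τ := by
    ext
    simp [σ, num, denom, coe_vadd, UpperHalfPlane.coe_smul, add_comm]
  simp_rw [slash_def, hx]
  simp [σ, denom, val_det_apply]

lemma slash_slash_eq_of_mul_eq_mul {γ γ' δ : GL (Fin 2) ℝ} (hf : f ∣[k] γ = f)
    (hδ : δ * γ' = γ * δ) : (f ∣[k] δ) ∣[k] γ' = f ∣[k] δ := by
  rw [← SlashAction.slash_mul, hδ, SlashAction.slash_mul, hf]

lemma slash_S_eq_of_slash_T_eq (hT : f ∣[k] ModularGroup.T = f)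
    (hL : f ∣[k] lowerUnipotent (1 : ℝ) = f) : f ∣[k] ModularGroup.S = f := by
  have hST : (f ∣[k] ModularGroup.S) ∣[k] ModularGroup.T = f := by
    rwa [lowerUnipotent_one_eq_T_mul_S_mul_T, ← SL_slash, SlashAction.slash_mul,
      SlashAction.slash_mul, hT] at hL
  calc f ∣[k] ModularGroup.S
    _ = ((f ∣[k] ModularGroup.S) ∣[k] ModularGroup.T) ∣[k] ModularGroup.T⁻¹ := by
      rw [← SlashAction.slash_mul, mul_inv_cancel, SlashAction.slash_one]
    _ = (f ∣[k] ModularGroup.T) ∣[k] ModularGroup.T⁻¹ := by rw [hST, hT]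
    _ = f := by rw [← SlashAction.slash_mul, mul_inv_cancel, SlashAction.slash_one]

/-- The level one modular form given by a holomorphic function that is bounded at `i∞` and
invariant under the generators `S` and `T` of `SL(2, ℤ)`. -/
def levelOneOfGenerators (hf : MDiff f) (hb : IsBoundedAtImInfty f)
    (hS : f ∣[k] ModularGroup.S = f) (hT : f ∣[k] ModularGroup.T = f) : ModularForm 𝒮ℒ k where
  toFun := f
  slash_action_eq' := by
    rintro _ ⟨γ, rfl⟩
    exact SlashInvariantForm.slash_action_generators_SL2Z hS hT γ
  holo' := hf
  bdd_at_cusps' hc := by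
    rw [OnePoint.isBoundedAt_iff_forall_SL2Z hc]
    intro γ _
    rwa [SlashInvariantForm.slash_action_generators_SL2Z hS hT γ]

theorem exists_levelOne_eq_slash_diagOne (hf : MDiff f) (hb : IsBoundedAtImInfty f) (r : ℝˣ)
    (hU : f ∣[k] upperRightHom (r⁻¹ : ℝ) = f) (hL : f ∣[k] lowerUnipotent (r : ℝ) = f) :
    ∃ g : ModularForm 𝒮ℒ k, ⇑g = f ∣[k] diagOne r := by
  have hT : (f ∣[k] diagOne r) ∣[k] ModularGroup.T = f ∣[k] diagOne r := by
    rw [SL_slash, coe_T_eq_upperRightHom]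
    exact slash_slash_eq_of_mul_eq_mul hU (by simpa using diagOne_mul_upperRightHom r (r⁻¹ : ℝ))
  have hL₁ : (f ∣[k] diagOne r) ∣[k] lowerUnipotent (1 : ℝ) = f ∣[k] diagOne r :=
    slash_slash_eq_of_mul_eq_mul hL (by simpa using diagOne_mul_lowerUnipotent r (1 : ℝ))
  exact ⟨levelOneOfGenerators (hf.slash k _) (hb.slash k (by simp [diagOne]))
    (slash_S_eq_of_slash_T_eq hT hL₁) hT, rfl⟩

end Slash

lemma periodic_tsum_exp_of_coeffs_vanish_off {N : ℕ} (hN : N ≠ 0) {a : ℕ → ℂ}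
    (ha : ∀ n, ¬ N ∣ n → a n = 0) :
    Function.Periodic (fun z : ℂ ↦ ∑' n : ℕ, a n * Complex.exp (2 * π * Complex.I * n * z))
      (N⁻¹ : ℂ) := by
  intro z
  refine tsum_congr fun n ↦ ?_
  by_cases hn : N ∣ n
  · obtain ⟨m, rfl⟩ := hn
    have hshift : 2 * π * Complex.I * (N * m : ℕ) * (z + (N : ℂ)⁻¹) =
        2 * π * Complex.I * (N * m : ℕ) * z + m * (2 * π * Complex.I) := by
      push_cast
      field_simp
    rw [hshift, Complex.exp_periodic.nat_mul m]
  · simp [ha n hn]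

theorem modularForm_eq_zero_of_coeffs_vanish_off_p_general {k : ℤ}
    (hk : Module.rank ℂ (ModularForm 𝒮ℒ k) = 0)
    {Γ : Subgroup (GL (Fin 2) ℝ)} [Fact (IsCusp ∞ Γ)]
    {N : ℕ} (hN : N ≠ 0) (hΓ : lowerUnipotent (N : ℝ) ∈ Γ)
    (h : ModularForm Γ k) (a : ℕ → ℂ)
    (ha : ∀ z : ℍ, h z = ∑' n : ℕ, a n * Complex.exp (2 * π * Complex.I * n * (z : ℂ)))
    (hvan : ∀ n, ¬ N ∣ n → a n = 0) :
    h = 0 := by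
  have hU : ⇑h ∣[k] upperRightHom (N⁻¹ : ℝ) = h := by
    ext τ
    rw [slash_upperRightHom_apply, ha, ha, coe_vadd, add_comm]
    simpa using periodic_tsum_exp_of_coeffs_vanish_off hN hvan τ
  have hL : ⇑h ∣[k] lowerUnipotent (N : ℝ) = h := SlashInvariantFormClass.slash_action_eq h _ hΓ
  obtain ⟨g, hg⟩ := exists_levelOne_eq_slash_diagOne (ModularFormClass.holo h)
    (ModularFormClass.bdd_at_infty h) (Units.mk0 (N : ℝ) (Nat.cast_ne_zero.mpr hN)) hU hL
  have hg₀ : g = 0 := rank_zero_iff_forall_zero.mp hk g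
  rw [hg₀, FunLike.coe_zero, eq_comm, SlashAction.slash_eq_zero_iff] at hg
  exact DFunLike.coe_injective hg

end

/-- **A weight 2 form on `Γ₀(p)` vanishing at all indices prime to `p` is zero.**
Let `p` be a prime and `h ∈ M₂(Γ₀(p))` with `q`-expansion `h(z) = ∑_{n ≥ 0} aₙ qⁿ`
(`q = e^{2πiz}`) at the cusp `∞`.  If `aₙ = 0` for every `n ≥ 1` with `p ∤ n`, then `h = 0`. -/
theorem modularForm_eq_zero_of_coeffs_vanish_off_p
    (p : ℕ) (hp : p.Prime)
    (h : ModularForm (CongruenceSubgroup.Gamma0 p) 2)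
    (a : ℕ → ℂ)
    (ha : ∀ z : UpperHalfPlane,
      h z = ∑' n : ℕ, a n * Complex.exp (2 * π * Complex.I * n * (z : ℂ)))
    (hvan : ∀ n : ℕ, 1 ≤ n → ¬ (p ∣ n) → a n = 0) :
    h = 0 := by
  have : NeZero p := ⟨hp.ne_zero⟩
  exact modularForm_eq_zero_of_coeffs_vanish_off_p_general
    ModularForm.levelOne_weight_two_rank_zero hp.ne_zero (lowerUnipotent_mem_Gamma0 p) h a ha
    fun n hn ↦ hvan n (Nat.pos_of_ne_zero fun hn₀ ↦ hn (hn₀ ▸ dvd_zero p)) hn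
end
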